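/- Let n, m ≥ 1, let v₁, …, v_m ∈ ℤⁿ, and let M be a vector space over ℚ. Suppose A₁, …, A_m ∈ M satisfy: (i) A_l = 0 for every l such that v_l is an extreme point of the convex hull conv{v₁, …, v_m} ⊆ ℝⁿ; and (ii) for every integer vector d = (d₁, …, d_m) ∈ ℤᵐ with Σ_{l=1}^m d_l · v_l = 0 in ℤⁿ, one has Σ_{l=1}^m d_l · A_l = 0 in M. Then A_l = 0 for all l = 1, …, m. -/

import Mathlib

/-!
By Krein–Milman the polytope `conv {v₁, …, v_m}` is the convex hull of its extreme points, so every
`v_l` is a real linear combination of those `v_j` that are extreme. A `ℚ`-linear retraction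
`ℝ → ℚ` of the inclusion, applied to the coefficients, makes the combination rational, and
clearing denominators writes a nonzero integer multiple `b • v_l` as an integer combination of
extreme `v_j`. The relations transfer this to `b • A_l`, a combination of vanishing `A_j`.
-/

section ExtremePoints

variable {E : Type*} [AddCommGroup E] [Module ℝ E] [TopologicalSpace E] [IsTopologicalAddGroup E]
  [ContinuousSMul ℝ E] [T2Space E] [LocallyConvexSpace ℝ E] {s : Set E}

theorem convexHull_extremePoints_convexHull_of_finite (hs : s.Finite) :
    convexHull ℝ ((convexHull ℝ s).extremePoints ℝ) = convexHull ℝ s := by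
  have extreme_finite : ((convexHull ℝ s).extremePoints ℝ).Finite :=
    hs.subset extremePoints_convexHull_subset
  rw [← (extreme_finite.isClosed_convexHull ℝ).closure_eq]
  exact closure_convexHull_extremePoints (hs.isCompact_convexHull ℝ) (convex_convexHull ℝ s)

theorem convexHull_subset_span_extremePoints_of_finite (hs : s.Finite) :
    convexHull ℝ s ⊆ Submodule.span ℝ ((convexHull ℝ s).extremePoints ℝ) :=
  calc convexHull ℝ s = convexHull ℝ ((convexHull ℝ s).extremePoints ℝ) :=
        (convexHull_extremePoints_convexHull_of_finite hs).symm
    _ ⊆ Submodule.span ℝ ((convexHull ℝ s).extremePoints ℝ) :=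
        convexHull_min Submodule.subset_span (Submodule.convex _)

end ExtremePoints

section Descent

variable (K L : Type*) [Field K] [Ring L] [Nontrivial L] [Algebra K L]

theorem exists_linearMap_apply_algebraMap_eq :
    ∃ π : L →ₗ[K] K, ∀ x : K, π (algebraMap K L x) = x := by
  obtain ⟨π, hπ⟩ := (Algebra.linearMap K L).exists_leftInverse_of_injective
    (LinearMap.ker_eq_bot.mpr (algebraMap K L).injective)
  exact ⟨π, LinearMap.congr_fun hπ⟩

variable {K L} {κ : Type*}

theorem mem_span_of_algebraMap_comp_mem_span {s : Set (κ → K)} {x : κ → K}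
    (hx : algebraMap K L ∘ x ∈ Submodule.span L ((algebraMap K L ∘ ·) '' s)) :
    x ∈ Submodule.span K s := by
  obtain ⟨π, hπ⟩ := exists_linearMap_apply_algebraMap_eq K L
  have retract_smul_mem : ∀ y ∈ Submodule.span L ((algebraMap K L ∘ ·) '' s),
      ∀ c : L, π.compLeft κ (c • y) ∈ Submodule.span K s := by
    intro y hy
    induction hy using Submodule.span_induction with
    | mem y hy =>
      obtain ⟨z, hz, rfl⟩ := hy
      intro c
      have retract_smul : π.compLeft κ (c • (algebraMap K L ∘ z)) = π c • z := by
        ext k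
        simp [← Algebra.commutes, ← Algebra.smul_def, mul_comm]
      rw [retract_smul]
      exact Submodule.smul_mem _ _ (Submodule.subset_span hz)
    | zero => simp
    | add y z _ _ hy hz =>
      intro c
      rw [smul_add, map_add]
      exact Submodule.add_mem _ (hy c) (hz c)
    | smul a y _ hy =>
      intro c
      rw [smul_smul]
      exact hy (c * a)
  have retract_x : π.compLeft κ (algebraMap K L ∘ x) = x := funext fun k => hπ (x k)
  simpa only [one_smul, retract_x] using retract_smul_mem _ hx 1

end Descent

section Relations

variable {R F N M : Type*} [Ring R] [AddCommGroup F] [Module R F] [AddCommGroup N] [Module R N]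
  [AddCommGroup M] [Module R M]

theorem comap_map_le_comap_map_of_ker_le {f : F →ₗ[R] N} {g : F →ₗ[R] M}
    (h : LinearMap.ker f ≤ LinearMap.ker g) (P : Submodule R F) :
    (P.map f).comap f ≤ (P.map g).comap g := by
  rw [Submodule.comap_map_eq, Submodule.comap_map_eq]
  exact sup_le_sup_left h P

theorem linearCombination_mem_span_image_of_ker_le {ι : Type*} {v : ι → N} {a : ι → M}
    (h : LinearMap.ker (Finsupp.linearCombination R v) ≤
      LinearMap.ker (Finsupp.linearCombination R a))
    {s : Set ι} {d : ι →₀ R} (hd : Finsupp.linearCombination R v d ∈ Submodule.span R (v '' s)) :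
    Finsupp.linearCombination R a d ∈ Submodule.span R (a '' s) := by
  rw [Finsupp.span_image_eq_map_linearCombination] at hd ⊢
  exact comap_map_le_comap_map_of_ker_le h _ hd

theorem sum_zsmul_intCast_eq_zero_iff {ι κ : Type*} [Fintype ι] [CharZero R] {d : ι → ℤ}
    {v : ι → κ → ℤ} : ∑ l, d l • (fun k => (v l k : R)) = 0 ↔ ∑ l, d l • v l = 0 := by
  simp only [funext_iff, Finset.sum_apply, Pi.smul_apply, Pi.zero_apply]
  simp only [zsmul_eq_mul, Int.cast_id]
  norm_cast

end Relations

theorem exists_smul_mem_span_image_extremePoints {ι κ : Type*} [Finite ι] (v : ι → κ → ℚ) (l : ι) :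
    ∃ b : ℤ, b ≠ 0 ∧ b • v l ∈ Submodule.span ℤ (v '' {j | (fun k => (v j k : ℝ)) ∈
      (convexHull ℝ (Set.range fun i k => (v i k : ℝ))).extremePoints ℝ}) := by
  set w : ι → κ → ℝ := fun j k => (v j k : ℝ)
  set extreme := w ⁻¹' (convexHull ℝ (Set.range w)).extremePoints ℝ
  have real_mem : w l ∈ Submodule.span ℝ (w '' extreme) := by
    rw [Set.image_preimage_eq_of_subset extremePoints_convexHull_subset]
    exact convexHull_subset_span_extremePoints_of_finite (Set.finite_range w)
      (subset_convexHull ℝ _ (Set.mem_range_self l))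
  have rat_mem : v l ∈ Submodule.span ℚ (v '' extreme) :=
    mem_span_of_algebraMap_comp_mem_span (L := ℝ) (by rwa [Set.image_image])
  obtain ⟨b, hb⟩ :=
    multiple_mem_span_of_mem_localization_span (nonZeroDivisors ℤ) ℚ _ _ rat_mem
  exact ⟨b, nonZeroDivisors.coe_ne_zero b, hb⟩

theorem vanishing_from_relations_general {ι κ M : Type*} [Fintype ι] [AddCommGroup M]
    [IsAddTorsionFree M] (v : ι → κ → ℚ) (A : ι → M)
    (extreme_zero : ∀ l, (fun k => (v l k : ℝ)) ∈
      (convexHull ℝ (Set.range fun j k => (v j k : ℝ))).extremePoints ℝ → A l = 0)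
    (relations : ∀ d : ι → ℤ, ∑ l, d l • v l = 0 → ∑ l, d l • A l = 0) (l : ι) :
    A l = 0 := by
  obtain ⟨b, hb, hbv⟩ := exists_smul_mem_span_image_extremePoints v l
  have ker_le : LinearMap.ker (Finsupp.linearCombination ℤ v) ≤
      LinearMap.ker (Finsupp.linearCombination ℤ A) := fun d hd => by
    simp only [LinearMap.mem_ker, Finsupp.linearCombination_apply, zero_smul, implies_true,
      Finsupp.sum_fintype] at hd ⊢
    exact relations d hd
  have smul_mem := linearCombination_mem_span_image_of_ker_le ker_le
    (d := Finsupp.single l b) (by rwa [Finsupp.linearCombination_single])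
  rw [Finsupp.linearCombination_single] at smul_mem
  have multiple_eq_zero : b • A l = 0 := by
    refine Submodule.span_le (p := ⊥).mpr ?_ smul_mem
    rintro _ ⟨j, hj, rfl⟩
    exact extreme_zero j hj
  exact (smul_eq_zero.mp multiple_eq_zero).resolve_left hb

/-- Let `n, m ≥ 1`, `v₁, …, v_m ∈ ℤⁿ`, and let `M` be a `ℚ`-vector space.
Suppose `A₁, …, A_m ∈ M` satisfy: (i) `A_l = 0` whenever `v_l` is an extreme point of
`conv{v₁, …, v_m} ⊆ ℝⁿ`; (ii) for every `d ∈ ℤᵐ` with `Σ_l d_l • v_l = 0` in `ℤⁿ` one has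
`Σ_l d_l • A_l = 0` in `M`.  Then `A_l = 0` for all `l`. -/
theorem vanishing_from_relations
    (n m : ℕ) (hn : 1 ≤ n) (hm : 1 ≤ m) (v : Fin m → Fin n → ℤ)
    (M : Type*) [AddCommGroup M] [Module ℚ M] (A : Fin m → M)
    (h1 : ∀ l : Fin m,
      (fun k => ((v l k : ℝ))) ∈
        Set.extremePoints ℝ (convexHull ℝ (Set.range fun j => fun k => ((v j k : ℝ)))) →
      A l = 0)
    (h2 : ∀ d : Fin m → ℤ, (∑ l, d l • v l) = 0 → (∑ l, d l • A l) = 0) :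
    ∀ l, A l = 0 := by
  have : IsAddTorsionFree M := .of_module_rat M
  exact vanishing_from_relations_general (fun l k => (v l k : ℚ)) A (by exact_mod_cast h1)
    fun d hd => h2 d (sum_zsmul_intCast_eq_zero_iff.mp hd)
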